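/- Let d ≥ 1, s ∈ (0,1), p ∈ (1,∞), and let Ω ⊂ ℝ^d be an open set with 0 ∈ Ω. Assume u ∈ L^{p−1}_{sp}(ℝ^d) is locally β-Hölder continuous in Ω for some β with sp/(p−1) < β ≤ 1, u vanishes to infinite order at 0 (for every n ∈ ℕ, u(x) = O(|x|^n) as |x| → 0), and the principal value U(x) := (−Δ_p)^s u(x) exists for every x ∈ Ω. Then for every multiindex α ∈ ℕ^d the function y ↦ J_p(u(y)) ∂_y^α |y|^{−d−sp} is absolutely integrable on ℝ^d and the finite difference quotients of U at the origin converge: D_ε^α U(0) → −∫_{ℝ^d} J_p(u(y)) (−1)^{|α|} ∂_y^α |y|^{−d−sp} dy as ε → 0⁺. -/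

import Mathlib

open MeasureTheory Filter Asymptotics Metric Set NNReal ENNReal

noncomputable section

/-- Euclidean space `ℝ^d`. -/
abbrev Ed (d : ℕ) := EuclideanSpace ℝ (Fin d)

/-- `J_p(t) = |t|^{p-2} t`. -/
def Jp (p t : ℝ) : ℝ := |t| ^ (p - 2) * t

/-- The principal value defining the fractional `p`-Laplacian of `u` at `x` exists and
equals `L`. -/
def fracPLapAt (d : ℕ) (s p : ℝ) (u : Ed d → ℝ) (x : Ed d) (L : ℝ) : Prop :=
  Tendsto (fun δ : ℝ =>
      ∫ y in {y : Ed d | δ < ‖x - y‖}, Jp p (u x - u y) / ‖x - y‖ ^ ((d : ℝ) + s * p))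
    (nhdsWithin 0 (Ioi 0)) (nhds L)

/-- Membership in the tail space `L^{p-1}_{sp}(ℝ^d)`. -/
def memTail (d : ℕ) (s p : ℝ) (u : Ed d → ℝ) : Prop :=
  Measurable u ∧
    Integrable (fun x : Ed d => |u x| ^ (p - 1) / (1 + ‖x‖) ^ ((d : ℝ) + s * p))

/-- The moments `m_{i,k} = ∫ x_i^{2k} |x|^{-4k} |u(x)|^{p-1} |x|^{-d-sp} dx ∈ [0,∞]`. -/
def mik (d : ℕ) (s p : ℝ) (u : Ed d → ℝ) (i : Fin d) (k : ℕ) : ℝ≥0∞ :=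
  ∫⁻ x : Ed d, ENNReal.ofReal
    ((x i ^ (2 * k) / ‖x‖ ^ (4 * k)) * (|u x| ^ (p - 1) / ‖x‖ ^ ((d : ℝ) + s * p)))

/-- The Carleman-type condition: for every `i` the series `∑_{k≥1} m_{i,k}^{-1/(2k)}`
diverges to `+∞` (with conventions `1/0 = ∞`, `1/∞ = 0`). -/
def carleman (d : ℕ) (s p : ℝ) (u : Ed d → ℝ) : Prop :=
  ∀ i : Fin d, ∑' k : ℕ, (mik d s p u i (k + 1) ^ ((1 : ℝ) / (2 * ((k : ℝ) + 1))))⁻¹ = ⊤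

/-- One-step forward difference quotient in direction `e_i` with step `ε`. -/
def fdiff1 (d : ℕ) (ε : ℝ) (i : Fin d) (g : Ed d → ℝ) : Ed d → ℝ :=
  fun x => (g (x + ε • EuclideanSpace.single i 1) - g x) / ε

/-- Finite difference quotient `D_ε^α` for a multiindex `α ∈ ℕ^d`. -/
def fdiffMulti (d : ℕ) (ε : ℝ) (α : Fin d → ℕ) (g : Ed d → ℝ) : Ed d → ℝ :=
  (List.finRange d).foldr (fun i acc => (fdiff1 d ε i)^[α i] acc) g

/-- Partial derivative in direction `e_i`. -/
def pderiv1 (d : ℕ) (i : Fin d) (g : Ed d → ℝ) : Ed d → ℝ :=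
  fun x => fderiv ℝ g x (EuclideanSpace.single i 1)

/-- Iterated partial derivative `∂^α` for a multiindex `α ∈ ℕ^d`. -/
def pderivMulti (d : ℕ) (α : Fin d → ℕ) (g : Ed d → ℝ) : Ed d → ℝ :=
  (List.finRange d).foldr (fun i acc => (pderiv1 d i)^[α i] acc) g

/-!
Since `u` is flat at the origin, `J_p(u(x) - u(y))` is nearly `-J_p(u(y))` when `|x|` is of order
`ε` and `y` is further away, while for `y` of order `ε` the Hölder bound and the flatness together
make the principal value integrand integrable and small. Hence on the `ε`-ball `U` equals, up to
`O(ε^N)` for every `N`, minus the convolution of the kernel `|z|^{-d-sp}` with `J_p(u)` cut off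
near the origin. Taking `k` difference quotients costs only a factor `ε^{-k}`, so it suffices to
difference the convolution. There the differences fall on the kernel, and if the cutoff radius
exceeds twice the total displacement the mean value theorem bounds them by a multiple of
`|y|^{-d-sp-k}`; this is integrable against `|u|^{p-1}`, again by flatness, and dominated
convergence applies.
-/

open scoped Topology ContDiff

lemma tendsto_mul_const_nhdsGT_zero (c : ℝ) :
    Tendsto (fun ε : ℝ => ε * c) (𝓝[>] 0) (𝓝 0) :=
  ((continuous_mul_const c).tendsto' 0 0 (zero_mul c)).mono_left nhdsWithin_le_nhds

section DifferenceQuotients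

variable {E : Type*} [NormedAddCommGroup E]

/-- The total length of a list of directions: `iterDiffQuot ε l g x` only depends on `g` in the
closed ball of radius `ε * reach l` about `x`. -/
def reach (l : List E) : ℝ :=
  (l.map norm).sum

lemma reach_cons (v : E) (l : List E) : reach (v :: l) = ‖v‖ + reach l := by
  simp [reach]

lemma reach_nonneg (l : List E) : 0 ≤ reach l :=
  List.sum_nonneg (by simp)

lemma closedBall_reach_subset_cons {ε : ℝ} (hε : 0 ≤ ε) (v : E) (l : List E) (x : E) :
    closedBall x (ε * reach l) ⊆ closedBall x (ε * reach (v :: l)) := by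
  rw [reach_cons]
  exact closedBall_subset_closedBall (by gcongr; exact le_add_of_nonneg_left (norm_nonneg v))

lemma isOpen_inter_preimage_add_right {V : Set E} (hV : IsOpen V) (w : E) :
    IsOpen (V ∩ (· + w) ⁻¹' V) :=
  hV.inter (hV.preimage (continuous_add_const w))

variable [NormedSpace ℝ E]

/-- The forward difference quotient of `g` with step `ε` in the direction `v`, which need not be a
unit vector: it tends to the derivative of `g` in the direction `v`. -/
def diffQuot (ε : ℝ) (v : E) (g : E → ℝ) : E → ℝ :=
  fun x => (g (x + ε • v) - g x) / ε

/-- Iterated difference quotients. A list of directions replaces the multiindex, so that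
induction peels off one direction at a time. -/
def iterDiffQuot (ε : ℝ) (l : List E) (g : E → ℝ) : E → ℝ :=
  l.foldr (diffQuot ε) g

/-- The derivative of `g` in the direction `v`, with Mathlib's junk value `0` where `g` is not
differentiable. -/
def dirDeriv (v : E) (g : E → ℝ) : E → ℝ :=
  fun x => fderiv ℝ g x v

/-- Iterated directional derivatives along a list of directions. -/
def iterDirDeriv (l : List E) (g : E → ℝ) : E → ℝ :=
  l.foldr dirDeriv g

lemma iterDiffQuot_cons (ε : ℝ) (v : E) (l : List E) (g : E → ℝ) :
    iterDiffQuot ε (v :: l) g = diffQuot ε v (iterDiffQuot ε l g) := rfl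

lemma iterDirDeriv_cons (v : E) (l : List E) (g : E → ℝ) :
    iterDirDeriv (v :: l) g = dirDeriv v (iterDirDeriv l g) := rfl

lemma diffQuot_comm (ε : ℝ) (v w : E) (g : E → ℝ) :
    diffQuot ε v (diffQuot ε w g) = diffQuot ε w (diffQuot ε v g) := by
  funext x
  simp only [diffQuot, add_right_comm x]
  ring

lemma iterDiffQuot_diffQuot (ε : ℝ) (v : E) (l : List E) (g : E → ℝ) :
    iterDiffQuot ε l (diffQuot ε v g) = diffQuot ε v (iterDiffQuot ε l g) := by
  induction l with
  | nil => rfl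
  | cons w l ih => rw [iterDiffQuot_cons, ih, diffQuot_comm, ← iterDiffQuot_cons]

lemma iterDiffQuot_add (ε : ℝ) (l : List E) (f g : E → ℝ) :
    iterDiffQuot ε l (f + g) = iterDiffQuot ε l f + iterDiffQuot ε l g := by
  induction l with
  | nil => rfl
  | cons v l ih =>
    funext x
    simp only [iterDiffQuot_cons, ih, diffQuot, Pi.add_apply]
    ring

lemma iterDiffQuot_const_mul (ε c : ℝ) (l : List E) (g : E → ℝ) (x : E) :
    iterDiffQuot ε l (fun y => c * g y) x = c * iterDiffQuot ε l g x := by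
  induction l generalizing x with
  | nil => rfl
  | cons v l ih =>
    simp only [iterDiffQuot_cons, diffQuot, ih]
    ring

lemma iterDiffQuot_comp_sub_right (ε : ℝ) (l : List E) (g : E → ℝ) (a x : E) :
    iterDiffQuot ε l (fun y => g (y - a)) x = iterDiffQuot ε l g (x - a) := by
  induction l generalizing x with
  | nil => rfl
  | cons v l ih => simp only [iterDiffQuot_cons, diffQuot, ih, add_sub_right_comm]

lemma add_smul_mem_closedBall_reach_cons {ε t : ℝ} (ht : t ∈ Icc 0 ε) {v : E} {l : List E}
    {x y : E} (hy : y ∈ closedBall x (ε * reach l)) :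
    y + t • v ∈ closedBall x (ε * reach (v :: l)) := by
  rw [mem_closedBall] at hy ⊢
  calc dist (y + t • v) x ≤ dist (y + t • v) y + dist y x := dist_triangle _ _ _
    _ = t * ‖v‖ + dist y x := by
      rw [dist_eq_norm, add_sub_cancel_left, norm_smul, Real.norm_of_nonneg ht.1]
    _ ≤ ε * ‖v‖ + ε * reach l := by gcongr; exact ht.2
    _ = ε * reach (v :: l) := by rw [reach_cons, mul_add]

lemma closedBall_add_smul_reach_subset_cons {ε : ℝ} (hε : 0 ≤ ε) (v : E) (l : List E) (x : E) :
    closedBall (x + ε • v) (ε * reach l) ⊆ closedBall x (ε * reach (v :: l)) := by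
  intro y hy
  have hy' : y - ε • v ∈ closedBall x (ε * reach l) := by
    rwa [mem_closedBall, dist_eq_norm, sub_sub, add_comm (ε • v), ← dist_eq_norm]
  simpa using add_smul_mem_closedBall_reach_cons (v := v) (right_mem_Icc.mpr hε) hy'

lemma abs_iterDiffQuot_le {ε : ℝ} (hε : 0 < ε) {M : ℝ} {g : E → ℝ} (l : List E) {x : E}
    (hg : ∀ y ∈ closedBall x (ε * reach l), |g y| ≤ M) :
    |iterDiffQuot ε l g x| ≤ (2 / ε) ^ l.length * M := by
  induction l generalizing x with
  | nil => simpa [iterDiffQuot] using hg x (by simp [reach])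
  | cons v l ih =>
    have h_base := ih fun y hy => hg y (closedBall_reach_subset_cons hε.le v l x hy)
    have h_shift := ih fun y hy => hg y (closedBall_add_smul_reach_subset_cons hε.le v l x hy)
    rw [iterDiffQuot_cons, diffQuot, abs_div, abs_of_pos hε, div_le_iff₀ hε]
    calc |iterDiffQuot ε l g (x + ε • v) - iterDiffQuot ε l g x|
        ≤ |iterDiffQuot ε l g (x + ε • v)| + |iterDiffQuot ε l g x| := abs_sub _ _
      _ ≤ 2 * ((2 / ε) ^ l.length * M) := by linarith
      _ = (2 / ε) ^ (v :: l).length * M * ε := by rw [List.length_cons, pow_succ]; field_simp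

lemma tendsto_iterDiffQuot_zero {l : List E} {x : E} {g : ℝ → E → ℝ} {C : ℝ}
    (hg : ∀ᶠ ε in 𝓝[>] (0 : ℝ), ∀ y ∈ closedBall x (ε * reach l),
      |g ε y| ≤ C * ε ^ (l.length + 1)) :
    Tendsto (fun ε => iterDiffQuot ε l (g ε) x) (𝓝[>] 0) (𝓝 0) := by
  refine squeeze_zero_norm' ?_ (tendsto_mul_const_nhdsGT_zero (2 ^ l.length * C))
  filter_upwards [hg, self_mem_nhdsWithin] with ε hgε (hε : 0 < ε)
  refine (abs_iterDiffQuot_le hε l hgε).trans_eq ?_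
  rw [div_pow, pow_succ]
  field_simp

lemma iterDiffQuot_integral {X : Type*} [MeasurableSpace X] {μ : Measure X} {ε : ℝ} (hε : 0 ≤ ε)
    {f : E → X → ℝ} (l : List E) {x : E}
    (hf : ∀ z ∈ closedBall x (ε * reach l), Integrable (f z) μ) :
    Integrable (fun y => iterDiffQuot ε l (fun z => f z y) x) μ ∧
      iterDiffQuot ε l (fun z => ∫ y, f z y ∂μ) x =
        ∫ y, iterDiffQuot ε l (fun z => f z y) x ∂μ := by
  induction l generalizing x with
  | nil => exact ⟨hf x (by simp [reach]), rfl⟩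
  | cons v l ih =>
    obtain ⟨h_int, h_eq⟩ := ih fun z hz => hf z (closedBall_reach_subset_cons hε v l x hz)
    obtain ⟨h_int', h_eq'⟩ :=
      ih fun z hz => hf z (closedBall_add_smul_reach_subset_cons hε v l x hz)
    simp only [iterDiffQuot_cons, diffQuot]
    refine ⟨(h_int'.sub h_int).div_const ε, ?_⟩
    rw [integral_div, integral_sub h_int' h_int, h_eq, h_eq']

lemma contDiffOn_iterDirDeriv {V : Set E} (hV : IsOpen V) {g : E → ℝ} (hg : ContDiffOn ℝ ∞ g V)
    (l : List E) : ContDiffOn ℝ ∞ (iterDirDeriv l g) V := by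
  induction l with
  | nil => exact hg
  | cons v l ih => exact (ih.fderiv_of_isOpen hV (by simp)).clm_apply contDiffOn_const

lemma contDiffOn_diffQuot {V : Set E} {g : E → ℝ} (hg : ContDiffOn ℝ ∞ g V) (ε : ℝ) (v : E) :
    ContDiffOn ℝ ∞ (diffQuot ε v g) (V ∩ (· + ε • v) ⁻¹' V) :=
  ((hg.comp (by fun_prop) fun _ hy => hy.2).sub (hg.mono inter_subset_left)).div_const ε

lemma dirDeriv_diffQuot {ε : ℝ} {v w y : E} {g : E → ℝ} (hg : DifferentiableAt ℝ g y)
    (hg' : DifferentiableAt ℝ g (y + ε • v)) :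
    dirDeriv w (diffQuot ε v g) y = diffQuot ε v (dirDeriv w g) y := by
  have h_shift : HasFDerivAt (fun z => g (z + ε • v)) (fderiv ℝ g (y + ε • v)) y :=
    hg'.hasFDerivAt.comp y ((hasFDerivAt_id y).add_const (ε • v))
  have h_quot : HasFDerivAt (diffQuot ε v g)
      (ε⁻¹ • (fderiv ℝ g (y + ε • v) - fderiv ℝ g y)) y :=
    ((h_shift.sub hg.hasFDerivAt).const_smul ε⁻¹).congr_of_eventuallyEq
      (.of_forall fun z => by simp [diffQuot, div_eq_inv_mul])
  simp [dirDeriv, h_quot.fderiv, diffQuot, div_eq_inv_mul]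

lemma iterDirDeriv_diffQuot {V : Set E} (hV : IsOpen V) {g : E → ℝ} (hg : ContDiffOn ℝ ∞ g V)
    (ε : ℝ) (v : E) (l : List E) :
    EqOn (iterDirDeriv l (diffQuot ε v g)) (diffQuot ε v (iterDirDeriv l g))
      (V ∩ (· + ε • v) ⁻¹' V) := by
  induction l with
  | nil => exact eqOn_refl _ _
  | cons w l ih =>
    intro y hy
    have h_near : iterDirDeriv l (diffQuot ε v g) =ᶠ[𝓝 y] diffQuot ε v (iterDirDeriv l g) :=
      ih.eventuallyEq_of_mem ((isOpen_inter_preimage_add_right hV (ε • v)).mem_nhds hy)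
    have h_diff : ∀ z ∈ V, DifferentiableAt ℝ (iterDirDeriv l g) z := fun z hz =>
      ((contDiffOn_iterDirDeriv hV hg l).contDiffAt (hV.mem_nhds hz)).differentiableAt (by simp)
    rw [iterDirDeriv_cons, iterDirDeriv_cons, dirDeriv, h_near.fderiv_eq]
    exact dirDeriv_diffQuot (h_diff y hy.1) (h_diff _ hy.2)

lemma exists_diffQuot_eq_dirDeriv {ε : ℝ} (hε : 0 < ε) {v y : E} {g : E → ℝ}
    (hg : ∀ t ∈ Icc 0 ε, DifferentiableAt ℝ g (y + t • v)) :
    ∃ t ∈ Icc 0 ε, diffQuot ε v g y = dirDeriv v g (y + t • v) := by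
  have h_deriv : ∀ t ∈ Icc 0 ε,
      HasDerivAt (fun t : ℝ => g (y + t • v)) (dirDeriv v g (y + t • v)) t := fun t ht => by
    have h_line : HasDerivAt (fun t : ℝ => y + t • v) v t := by
      simpa using ((hasDerivAt_id t).smul_const v).const_add y
    exact (hg t ht).hasFDerivAt.comp_hasDerivAt t h_line
  obtain ⟨t, ht, h_slope⟩ := exists_hasDerivAt_eq_slope _ _ hε
    (fun t ht => (h_deriv t ht).continuousAt.continuousWithinAt)
    (fun t ht => h_deriv t (Ioo_subset_Icc_self ht))
  exact ⟨t, Ioo_subset_Icc_self ht, by simp [h_slope, diffQuot]⟩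

lemma exists_iterDiffQuot_eq_iterDirDeriv {ε : ℝ} (hε : 0 < ε) (l : List E) {V : Set E}
    (hV : IsOpen V) {g : E → ℝ} (hg : ContDiffOn ℝ ∞ g V) {x : E}
    (hx : closedBall x (ε * reach l) ⊆ V) :
    ∃ z ∈ closedBall x (ε * reach l), iterDiffQuot ε l g x = iterDirDeriv l g z := by
  induction l generalizing V g with
  | nil => exact ⟨x, by simp [reach], rfl⟩
  | cons v l ih =>
    have hx' : closedBall x (ε * reach l) ⊆ V ∩ (· + ε • v) ⁻¹' V := fun y hy =>
      ⟨hx (closedBall_reach_subset_cons hε.le v l x hy),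
        hx (add_smul_mem_closedBall_reach_cons (right_mem_Icc.mpr hε.le) hy)⟩
    obtain ⟨z, hz, h_iter⟩ := ih (isOpen_inter_preimage_add_right hV (ε • v))
      (contDiffOn_diffQuot hg ε v) hx'
    obtain ⟨t, ht, h_mvt⟩ := exists_diffQuot_eq_dirDeriv (v := v) (y := z) hε fun t ht =>
      ((contDiffOn_iterDirDeriv hV hg l).contDiffAt
        (hV.mem_nhds (hx (add_smul_mem_closedBall_reach_cons ht hz)))).differentiableAt (by simp)
    refine ⟨z + t • v, add_smul_mem_closedBall_reach_cons ht hz, ?_⟩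
    rw [iterDiffQuot_cons, ← iterDiffQuot_diffQuot, h_iter,
      iterDirDeriv_diffQuot hV hg ε v l (hx' hz), h_mvt, iterDirDeriv_cons]

lemma tendsto_iterDiffQuot {V : Set E} (hV : IsOpen V) {g : E → ℝ} (hg : ContDiffOn ℝ ∞ g V)
    (l : List E) {x : E} (hx : x ∈ V) :
    Tendsto (fun ε => iterDiffQuot ε l g x) (𝓝[>] 0) (𝓝 (iterDirDeriv l g x)) := by
  have h_cont : ContinuousAt (iterDirDeriv l g) x :=
    (contDiffOn_iterDirDeriv hV hg l).continuousOn.continuousAt (hV.mem_nhds hx)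
  obtain ⟨r, hr, hrV⟩ := Metric.isOpen_iff.mp hV x hx
  refine Metric.tendsto_nhds.mpr fun κ hκ => ?_
  obtain ⟨δ, hδ, h_close⟩ := Metric.continuousAt_iff.mp h_cont κ hκ
  filter_upwards [self_mem_nhdsWithin,
    (tendsto_mul_const_nhdsGT_zero (reach l)).eventually (gt_mem_nhds (lt_min hr hδ))]
    with ε (hε : 0 < ε) h_small
  obtain ⟨z, hz, h_eq⟩ := exists_iterDiffQuot_eq_iterDirDeriv hε l hV hg
    ((closedBall_subset_ball (h_small.trans_le (min_le_left r δ))).trans hrV)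
  rw [h_eq]
  exact h_close ((mem_closedBall.mp hz).trans_lt (h_small.trans_le (min_le_right r δ)))

lemma iterDirDeriv_smul {c κ : ℝ} (hc : c ≠ 0) {g : E → ℝ} (hg : ∀ z, g (c • z) = κ * g z)
    (l : List E) (z : E) :
    iterDirDeriv l g (c • z) = κ / c ^ l.length * iterDirDeriv l g z := by
  induction l generalizing z with
  | nil => simpa [iterDirDeriv] using hg z
  | cons v l ih =>
    have h_funext : (fun z => iterDirDeriv l g (c • z)) =
        (κ / c ^ l.length) • iterDirDeriv l g := funext ih
    have h_fderiv : c • fderiv ℝ (iterDirDeriv l g) (c • z) =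
        (κ / c ^ l.length) • fderiv ℝ (iterDirDeriv l g) z := by
      rw [← fderiv_comp_smul, h_funext, fderiv_const_smul_field, Pi.smul_apply]
    have h_apply : c * fderiv ℝ (iterDirDeriv l g) (c • z) v =
        κ / c ^ l.length * fderiv ℝ (iterDirDeriv l g) z v := congrArg (· v) h_fderiv
    rw [iterDirDeriv_cons, dirDeriv, dirDeriv, List.length_cons, pow_succ]
    field_simp at h_apply ⊢
    linear_combination h_apply

lemma measurable_iterDirDeriv [MeasurableSpace E] [OpensMeasurableSpace E] {g : E → ℝ}
    (hg : Measurable g) (l : List E) : Measurable (iterDirDeriv l g) := by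
  cases l with
  | nil => exact hg
  | cons v l => exact measurable_fderiv_apply_const ℝ _ v

end DifferenceQuotients

section SignedPower

lemma abs_Jp {p : ℝ} (hp : p ≠ 1) (t : ℝ) : |Jp p t| = |t| ^ (p - 1) := by
  rcases eq_or_ne t 0 with rfl | ht
  · simp [Jp, Real.zero_rpow (sub_ne_zero.mpr hp)]
  · rw [Jp, abs_mul, Real.abs_rpow_of_nonneg (abs_nonneg t), abs_abs,
      ← Real.rpow_add_one (abs_ne_zero.mpr ht)]
    ring_nf

lemma measurable_Jp (p : ℝ) : Measurable (Jp p) :=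
  (measurable_id.abs.pow_const _).mul measurable_id

lemma Jp_zero (p : ℝ) : Jp p 0 = 0 := by simp [Jp]

lemma Jp_neg (p t : ℝ) : Jp p (-t) = -Jp p t := by simp [Jp]

lemma Jp_mul (p a b : ℝ) : Jp p (a * b) = Jp p a * Jp p b := by
  rw [Jp, abs_mul, Real.mul_rpow (abs_nonneg a) (abs_nonneg b), Jp, Jp]
  ring

lemma exists_abs_Jp_one_sub_sub_one_le (p : ℝ) :
    ∃ K ≥ 0, ∀ t : ℝ, |t| ≤ 1 / 2 → |Jp p (1 - t) - 1| ≤ K * |t| := by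
  have h_smooth : ContDiffOn ℝ 1 (Jp p) (Icc (1 / 2) (3 / 2)) := by
    have h_rpow : ContDiffOn ℝ 1 (fun t : ℝ => t ^ (p - 2) * t) (Icc (1 / 2) (3 / 2)) :=
      (contDiffOn_id.rpow_const_of_ne fun t ht => by
        have := ht.1
        positivity).mul contDiffOn_id
    exact h_rpow.congr fun t ht => by rw [Jp, abs_of_nonneg (by linarith [ht.1])]
  obtain ⟨K, hK⟩ := h_smooth.exists_lipschitzOnWith one_ne_zero (convex_Icc _ _) isCompact_Icc
  refine ⟨K, K.2, fun t ht => ?_⟩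
  obtain ⟨h_lower, h_upper⟩ := abs_le.mp ht
  have h_lip := hK.dist_le_mul (1 - t) ⟨by linarith, by linarith⟩ 1 ⟨by norm_num, by norm_num⟩
  simpa [Real.dist_eq, Jp] using h_lip

lemma rpow_mul_rpow_neg_le_one_add_rpow {b r t : ℝ} (hb : 0 < b) (ht : 0 ≤ t) (htr : t ≤ r) :
    b ^ r * b ^ (-t) ≤ 1 + b ^ r := by
  rw [← Real.rpow_add hb, ← sub_eq_add_neg]
  have h_pos := Real.rpow_pos_of_pos hb r
  rcases le_total b 1 with hb1 | hb1
  · linarith [Real.rpow_le_one hb.le hb1 (sub_nonneg.mpr htr)]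
  · linarith [Real.rpow_le_rpow_of_exponent_le hb1 (sub_le_self r ht)]

lemma exists_abs_Jp_sub_add_le_of_two_mul_lt {p : ℝ} (hp : 1 < p) :
    ∃ K ≥ 0, ∀ a b : ℝ, 2 * |a| < |b| →
      |Jp p (a - b) + Jp p b| ≤ K * |a| ^ min 1 (p - 1) * (1 + |b| ^ (p - 1)) := by
  obtain ⟨K, hK, h_lip⟩ := exists_abs_Jp_one_sub_sub_one_le p
  refine ⟨K, hK, fun a b hab => ?_⟩
  set m := min 1 (p - 1)
  have hm : 0 ≤ m := le_min zero_le_one (by linarith)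
  have hb : 0 < |b| := by linarith [abs_nonneg a]
  have h_ratio : |a / b| ≤ 1 / 2 := by rw [abs_div, div_le_iff₀ hb]; linarith
  have h_factor : Jp p (a - b) + Jp p b = -(Jp p b * (Jp p (1 - a / b) - 1)) := by
    have : a - b = -(b * (1 - a / b)) := by
      have := abs_pos.mp hb
      field_simp
      ring
    rw [this, Jp_neg, Jp_mul]
    ring
  have h_ratio_rpow : |a / b| ≤ |a| ^ m * |b| ^ (-m) := calc
    |a / b| = |a / b| ^ (1 : ℝ) := (Real.rpow_one _).symm
    _ ≤ |a / b| ^ m := Real.rpow_le_rpow_of_exponent_ge' (abs_nonneg _) (by linarith) hm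
        (min_le_left _ _)
    _ = |a| ^ m * |b| ^ (-m) := by
      rw [abs_div, Real.div_rpow (abs_nonneg a) hb.le, Real.rpow_neg hb.le, div_eq_mul_inv]
  rw [h_factor, abs_neg, abs_mul, abs_Jp hp.ne']
  calc |b| ^ (p - 1) * |Jp p (1 - a / b) - 1|
      ≤ |b| ^ (p - 1) * (K * (|a| ^ m * |b| ^ (-m))) := by
        gcongr
        exact (h_lip _ h_ratio).trans (by gcongr)
    _ = K * |a| ^ m * (|b| ^ (p - 1) * |b| ^ (-m)) := by ring
    _ ≤ K * |a| ^ m * (1 + |b| ^ (p - 1)) := by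
        gcongr
        exact rpow_mul_rpow_neg_le_one_add_rpow hb hm (min_le_right _ _)

lemma abs_Jp_sub_add_le_of_le_two_mul {p : ℝ} (hp : 1 < p) {a b : ℝ} (ha : |a| ≤ 1)
    (hab : |b| ≤ 2 * |a|) :
    |Jp p (a - b) + Jp p b| ≤ 2 * 3 ^ (p - 1) * |a| ^ min 1 (p - 1) * (1 + |b| ^ (p - 1)) := by
  have hp' : 0 ≤ p - 1 := by linarith
  have h_rpow : ∀ t : ℝ, |t| ≤ 3 * |a| → |Jp p t| ≤ 3 ^ (p - 1) * |a| ^ min 1 (p - 1) :=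
    fun t ht => calc
      |Jp p t| = |t| ^ (p - 1) := abs_Jp hp.ne' t
      _ ≤ (3 * |a|) ^ (p - 1) := by gcongr
      _ = 3 ^ (p - 1) * |a| ^ (p - 1) := Real.mul_rpow (by norm_num) (abs_nonneg a)
      _ ≤ 3 ^ (p - 1) * |a| ^ min 1 (p - 1) :=
        mul_le_mul_of_nonneg_left (Real.rpow_le_rpow_of_exponent_ge' (abs_nonneg a) ha
          (le_min zero_le_one hp') (min_le_right _ _)) (by positivity)
  calc |Jp p (a - b) + Jp p b| ≤ |Jp p (a - b)| + |Jp p b| := abs_add_le _ _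
    _ ≤ 2 * 3 ^ (p - 1) * |a| ^ min 1 (p - 1) * 1 := by
      linarith [h_rpow (a - b) ((abs_sub a b).trans (by linarith)),
        h_rpow b (by linarith [abs_nonneg a])]
    _ ≤ 2 * 3 ^ (p - 1) * |a| ^ min 1 (p - 1) * (1 + |b| ^ (p - 1)) := by
      gcongr
      exact le_add_of_nonneg_right (by positivity)

lemma exists_abs_Jp_sub_add_le {p : ℝ} (hp : 1 < p) :
    ∃ K ≥ 0, ∀ a b : ℝ, |a| ≤ 1 →
      |Jp p (a - b) + Jp p b| ≤ K * |a| ^ min 1 (p - 1) * (1 + |b| ^ (p - 1)) := by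
  obtain ⟨K, hK, h_far⟩ := exists_abs_Jp_sub_add_le_of_two_mul_lt hp
  refine ⟨max K (2 * 3 ^ (p - 1)), le_max_of_le_left hK, fun a b ha => ?_⟩
  rcases lt_or_ge (2 * |a|) |b| with hab | hab
  · exact (h_far a b hab).trans (by gcongr; exact le_max_left _ _)
  · exact (abs_Jp_sub_add_le_of_le_two_mul hp ha hab).trans (by gcongr; exact le_max_right _ _)

end SignedPower

section RieszKernel

variable {E : Type*} [NormedAddCommGroup E]

/-- The kernel `‖z‖ ^ (-q)` of the principal value, which in the application has exponent
`q = d + s p`. -/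
def rieszKernel (q : ℝ) (z : E) : ℝ :=
  ‖z‖ ^ (-q)

lemma rieszKernel_nonneg (q : ℝ) (z : E) : 0 ≤ rieszKernel q z :=
  Real.rpow_nonneg (norm_nonneg z) _

lemma measurable_rieszKernel [MeasurableSpace E] [OpensMeasurableSpace E] (q : ℝ) :
    Measurable (rieszKernel q : E → ℝ) :=
  measurable_norm.pow_const _

lemma rpow_neg_le_of_half_le {a b q : ℝ} (hq : 0 ≤ q) (ha : 0 < a) (hab : a / 2 ≤ b) :
    b ^ (-q) ≤ 2 ^ q * a ^ (-q) := calc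
  b ^ (-q) ≤ (a / 2) ^ (-q) :=
    Real.rpow_le_rpow_of_nonpos (half_pos ha) hab (neg_nonpos.mpr hq)
  _ = 2 ^ q * a ^ (-q) := by
    rw [Real.div_rpow ha.le zero_le_two, Real.rpow_neg zero_le_two, div_inv_eq_mul, mul_comm]

lemma rieszKernel_sub_le {q : ℝ} (hq : 0 ≤ q) {x y : E} (hy : y ≠ 0) (hxy : 2 * ‖x‖ ≤ ‖y‖) :
    rieszKernel q (x - y) ≤ 2 ^ q * ‖y‖ ^ (-q) := by
  refine rpow_neg_le_of_half_le hq (norm_pos_iff.mpr hy) ?_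
  linarith [norm_sub_norm_le y x, norm_sub_rev x y]

lemma iterDirDeriv_rieszKernel_neg [NormedSpace ℝ E] (q : ℝ) (l : List E) (z : E) :
    iterDirDeriv l (rieszKernel q) (-z) = (-1) ^ l.length * iterDirDeriv l (rieszKernel q) z := by
  have h := iterDirDeriv_smul (c := -1) (κ := 1) (g := rieszKernel q) (by norm_num)
    (fun z => by simp [rieszKernel]) l z
  rw [neg_one_smul] at h
  rw [h, one_div, ← inv_pow, inv_neg_one]

lemma iterDirDeriv_rieszKernel_smul [NormedSpace ℝ E] (q : ℝ) {c : ℝ} (hc : 0 < c) (l : List E)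
    (z : E) :
    iterDirDeriv l (rieszKernel q) (c • z) =
      c ^ (-(q + l.length)) * iterDirDeriv l (rieszKernel q) z := by
  rw [iterDirDeriv_smul (κ := c ^ (-q)) hc.ne' fun z => ?_, neg_add, Real.rpow_add hc,
    Real.rpow_neg_natCast, zpow_neg, zpow_natCast, div_eq_mul_inv]
  rw [rieszKernel, norm_smul, Real.norm_of_nonneg hc.le, Real.mul_rpow hc.le (norm_nonneg z),
    rieszKernel]

variable [InnerProductSpace ℝ E]

lemma contDiffOn_rieszKernel (q : ℝ) : ContDiffOn ℝ ∞ (rieszKernel q : E → ℝ) {0}ᶜ :=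
  fun _ hz => ((contDiffAt_norm ℝ hz).rpow_const_of_ne (norm_ne_zero_iff.mpr hz)).contDiffWithinAt

lemma exists_abs_iterDirDeriv_rieszKernel_le [FiniteDimensional ℝ E] (q : ℝ) (l : List E) :
    ∃ C ≥ 0, ∀ z : E, z ≠ 0 →
      |iterDirDeriv l (rieszKernel q) z| ≤ C * ‖z‖ ^ (-(q + l.length)) := by
  have h_cont : ContinuousOn (iterDirDeriv l (rieszKernel q)) (sphere (0 : E) 1) :=
    (contDiffOn_iterDirDeriv isOpen_compl_singleton (contDiffOn_rieszKernel q) l).continuousOn.mono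
      fun z hz => ne_of_mem_sphere hz one_ne_zero
  obtain ⟨C, hC⟩ := (isCompact_sphere (0 : E) 1).exists_bound_of_continuousOn h_cont
  refine ⟨max C 0, le_max_right _ _, fun z hz => ?_⟩
  have hz' : 0 < ‖z‖ := norm_pos_iff.mpr hz
  have h_unit : ‖z‖⁻¹ • z ∈ sphere (0 : E) 1 := by simp [norm_smul, hz'.ne']
  have h_scale := iterDirDeriv_rieszKernel_smul q hz' l (‖z‖⁻¹ • z)
  rw [smul_inv_smul₀ hz'.ne'] at h_scale
  rw [h_scale, abs_mul, Real.abs_rpow_of_nonneg hz'.le, abs_norm, mul_comm]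
  gcongr
  exact (hC _ h_unit).trans (le_max_left _ _)

lemma exists_abs_iterDiffQuot_rieszKernel_le [FiniteDimensional ℝ E] {q : ℝ} (hq : 0 ≤ q)
    (l : List E) :
    ∃ C ≥ 0, ∀ ε > 0, ∀ y : E, ε * (2 * reach l + 1) < ‖y‖ →
      |iterDiffQuot ε l (rieszKernel q) (-y)| ≤ C * ‖y‖ ^ (-(q + l.length)) := by
  obtain ⟨C, hC, h_deriv⟩ := exists_abs_iterDirDeriv_rieszKernel_le q l
  refine ⟨C * 2 ^ (q + l.length), by positivity, fun ε hε y hy => ?_⟩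
  have h_reach : 0 ≤ ε * reach l := mul_nonneg hε.le (reach_nonneg l)
  have hy_pos : 0 < ‖y‖ := by linarith
  have h_far : ∀ z ∈ closedBall (-y) (ε * reach l), ‖y‖ / 2 ≤ ‖z‖ := fun z hz => by
    rw [mem_closedBall, dist_eq_norm] at hz
    linarith [norm_sub_norm_le (-y) z, norm_sub_rev (-y) z, norm_neg y]
  obtain ⟨z, hz, h_eq⟩ := exists_iterDiffQuot_eq_iterDirDeriv hε l isOpen_compl_singleton
    (contDiffOn_rieszKernel q) fun z hz =>
      norm_pos_iff.mp ((half_pos hy_pos).trans_le (h_far z hz))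
  have hz_half := h_far z hz
  rw [h_eq, mul_assoc]
  refine (h_deriv z (norm_pos_iff.mp (by linarith))).trans ?_
  gcongr
  exact rpow_neg_le_of_half_le (by positivity) hy_pos hz_half

end RieszKernel

section InfiniteOrderVanishing

variable {E : Type*} [NormedAddCommGroup E] {u : E → ℝ}

/-- `u` vanishes at the origin faster than every power of the norm. -/
def VanishesToInfiniteOrder (u : E → ℝ) : Prop :=
  ∀ n : ℕ, u =O[𝓝 0] fun x => ‖x‖ ^ n

lemma eventually_forall_norm_le_mul {P : E → Prop} (hP : ∀ᶠ x in 𝓝 0, P x) (R : ℝ) :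
    ∀ᶠ ε in 𝓝[>] (0 : ℝ), ∀ x, ‖x‖ ≤ ε * R → P x := by
  obtain ⟨r, hr, hrP⟩ := Metric.eventually_nhds_iff.mp hP
  filter_upwards [(tendsto_mul_const_nhdsGT_zero R).eventually (gt_mem_nhds hr)] with ε hε x hx
  exact hrP (by simpa using hx.trans_lt hε)

namespace VanishesToInfiniteOrder

lemma eventually_abs_le_pow (hu : VanishesToInfiniteOrder u) (n : ℕ) :
    ∀ᶠ x in 𝓝 0, |u x| ≤ ‖x‖ ^ n := by
  have h_little : u =o[𝓝 0] fun x => ‖x‖ ^ n :=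
    (hu (n + 1)).trans_isLittleO ((isLittleO_norm_pow_norm_pow n.lt_succ_self))
  simpa using h_little.bound one_pos

lemma apply_zero (hu : VanishesToInfiniteOrder u) : u 0 = 0 := by
  simpa using (hu.eventually_abs_le_pow 1).self_of_nhds

lemma eventually_abs_le_rpow (hu : VanishesToInfiniteOrder u) (M R : ℝ) :
    ∀ᶠ ε in 𝓝[>] 0, ∀ x, ‖x‖ ≤ ε * R → |u x| ≤ ε ^ M := by
  obtain ⟨n, hn⟩ := exists_nat_ge M
  filter_upwards [eventually_forall_norm_le_mul (hu.eventually_abs_le_pow (n + 1)) R,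
    (tendsto_mul_const_nhdsGT_zero (R ^ (n + 1))).eventually (ge_mem_nhds one_pos),
    Ioc_mem_nhdsGT one_pos] with ε h_flat h_small hε x hx
  calc |u x| ≤ ‖x‖ ^ (n + 1) := h_flat x hx
    _ ≤ (ε * R) ^ (n + 1) := by gcongr
    _ = ε ^ n * (ε * R ^ (n + 1)) := by ring
    _ ≤ ε ^ n := mul_le_of_le_one_right (pow_nonneg hε.1.le n) h_small
    _ = ε ^ (n : ℝ) := (Real.rpow_natCast ε n).symm
    _ ≤ ε ^ M := Real.rpow_le_rpow_of_exponent_ge hε.1 hε.2 hn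

lemma eventually_rpow_mul_norm_rpow_neg_le_one (hu : VanishesToInfiniteOrder u) {r : ℝ}
    (hr : 0 < r) (a : ℝ) : ∀ᶠ y in 𝓝 0, |u y| ^ r * ‖y‖ ^ (-a) ≤ 1 := by
  obtain ⟨n, hn⟩ := exists_nat_ge (a / r)
  rw [div_le_iff₀ hr] at hn
  filter_upwards [hu.eventually_abs_le_pow n, closedBall_mem_nhds 0 one_pos] with y h_flat hy
  rcases eq_or_ne y 0 with rfl | hy0
  · simp [hu.apply_zero, Real.zero_rpow hr.ne']
  have hy_pos : 0 < ‖y‖ := norm_pos_iff.mpr hy0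
  calc |u y| ^ r * ‖y‖ ^ (-a) ≤ (‖y‖ ^ n) ^ r * ‖y‖ ^ (-a) := by gcongr
    _ = ‖y‖ ^ (n * r - a) := by
      rw [← Real.rpow_natCast, ← Real.rpow_mul hy_pos.le, ← Real.rpow_add hy_pos, sub_eq_add_neg]
    _ ≤ 1 := Real.rpow_le_one hy_pos.le (mem_closedBall_zero_iff.mp hy) (sub_nonneg.mpr hn)

end VanishesToInfiniteOrder

end InfiniteOrderVanishing

section Weights

lemma rpow_neg_le_div_one_add_rpow {q r t : ℝ} (hq : 0 ≤ q) (hr : 0 < r) (hr1 : r ≤ 1)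
    (ht : r ≤ t) : t ^ (-q) ≤ (2 / r) ^ q / (1 + t) ^ q := by
  have ht_pos : 0 < t := hr.trans_le ht
  have h_base : t⁻¹ ≤ 2 / r / (1 + t) := by
    rw [inv_eq_one_div, div_div, div_le_div_iff₀ ht_pos (by positivity)]
    nlinarith
  rw [Real.rpow_neg ht_pos.le, ← Real.inv_rpow ht_pos.le,
    ← Real.div_rpow (by positivity) (by positivity)]
  gcongr

variable {E : Type*} [NormedAddCommGroup E]

/-- The weight that dominates the principal value integrand away from the origin; there
`r = p - 1`. -/
def tailWeight (r q : ℝ) (u : E → ℝ) (y : E) : ℝ :=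
  (1 + |u y| ^ r) / (1 + ‖y‖) ^ q

/-- The singularity that the Hölder bound leaves on the diagonal, as a function of the difference
of the two variables. -/
def singularWeight (a : ℝ) : E → ℝ :=
  (ball 0 1).indicator (fun z => ‖z‖ ^ (-a))

lemma tailWeight_nonneg (r q : ℝ) (u : E → ℝ) (y : E) : 0 ≤ tailWeight r q u y := by
  unfold tailWeight
  positivity

lemma singularWeight_nonneg (a : ℝ) (z : E) : 0 ≤ singularWeight a z :=
  indicator_nonneg (fun z _ => Real.rpow_nonneg (norm_nonneg z) _) z

lemma VanishesToInfiniteOrder.integrable_rpow_mul_norm_rpow_neg [ProperSpace E]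
    [MeasurableSpace E] [BorelSpace E] {μ : Measure E} [IsFiniteMeasureOnCompacts μ] {u : E → ℝ}
    (hu : VanishesToInfiniteOrder u) (hmeas : Measurable u) {r q a : ℝ} (hr : 0 < r) (hq : 0 ≤ q)
    (htail : Integrable (fun x => |u x| ^ r / (1 + ‖x‖) ^ q) μ) (hqa : q ≤ a) :
    Integrable (fun y => |u y| ^ r * ‖y‖ ^ (-a)) μ := by
  obtain ⟨ρ, hρ, h_near⟩ :=
    Metric.eventually_nhds_iff_ball.mp (hu.eventually_rpow_mul_norm_rpow_neg_le_one hr a)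
  have h_meas : Measurable fun y => |u y| ^ r * ‖y‖ ^ (-a) :=
    (hmeas.abs.pow_const r).mul (measurable_norm.pow_const (-a))
  have h_abs : ∀ y, ‖|u y| ^ r * ‖y‖ ^ (-a)‖ = |u y| ^ r * ‖y‖ ^ (-a) := fun y =>
    Real.norm_of_nonneg (by positivity)
  set σ := min ρ 1
  have hσ : 0 < σ := lt_min hρ one_pos
  rw [← integrableOn_univ, ← union_compl_self (ball (0 : E) σ), integrableOn_union]
  constructor
  · refine Measure.integrableOn_of_bounded measure_ball_lt_top.ne h_meas.aestronglyMeasurable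
      (M := 1) (ae_restrict_of_forall_mem measurableSet_ball fun y hy => ?_)
    rw [h_abs]
    exact h_near y (ball_subset_ball (min_le_left ρ 1) hy)
  · refine (htail.const_mul (σ ^ (-(a - q)) * (2 / σ) ^ q)).integrableOn.mono'
      h_meas.aestronglyMeasurable
      (ae_restrict_of_forall_mem measurableSet_ball.compl fun y hy => ?_)
    have hσy : σ ≤ ‖y‖ := by simpa using hy
    rw [h_abs]
    calc |u y| ^ r * ‖y‖ ^ (-a) = |u y| ^ r * (‖y‖ ^ (-(a - q)) * ‖y‖ ^ (-q)) := by
          rw [← Real.rpow_add (hσ.trans_le hσy)]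
          ring_nf
      _ ≤ |u y| ^ r * (σ ^ (-(a - q)) * ((2 / σ) ^ q / (1 + ‖y‖) ^ q)) := by
        gcongr |u y| ^ r * (?_ * ?_)
        · exact Real.rpow_le_rpow_of_nonpos hσ hσy (by linarith)
        · exact rpow_neg_le_div_one_add_rpow hq hσ (min_le_right ρ 1) hσy
      _ = σ ^ (-(a - q)) * (2 / σ) ^ q * (|u y| ^ r / (1 + ‖y‖) ^ q) := by ring

variable [NormedSpace ℝ E] [FiniteDimensional ℝ E] [MeasurableSpace E] [BorelSpace E]
  {μ : Measure E} [μ.IsAddHaarMeasure]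

lemma integrable_tailWeight {r q : ℝ} (hq : Module.finrank ℝ E < q) {u : E → ℝ}
    (hu : Integrable (fun x => |u x| ^ r / (1 + ‖x‖) ^ q) μ) :
    Integrable (tailWeight r q u) μ := by
  refine ((integrable_one_add_norm hq).add hu).congr (.of_forall fun y => ?_)
  rw [Pi.add_apply, tailWeight, add_div, Real.rpow_neg (by positivity), one_div]

lemma integrable_singularWeight [Nontrivial E] {a : ℝ} (ha : a < Module.finrank ℝ E) :
    Integrable (singularWeight a) μ := by
  refine (integrable_indicator_iff measurableSet_ball).mpr ?_
  refine integrableOn_ball_of_norm_le_rpow (C := 1) Module.finrank_pos ha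
    (.of_forall fun z => ?_) (measurable_norm.pow_const _).aestronglyMeasurable
  rw [one_mul, Real.norm_of_nonneg (by positivity)]

end Weights

section ErrorEstimate

variable {E : Type*} [NormedAddCommGroup E] {u : E → ℝ} {p q : ℝ}

/-- The integrand of the principal value: for `q = d + s p` its integral in `y` is the fractional
`p`-Laplacian of `u` at `x`, whenever it converges absolutely. -/
def fracIntegrand (p q : ℝ) (u : E → ℝ) (x y : E) : ℝ :=
  Jp p (u x - u y) * rieszKernel q (x - y)

/-- The integrand of the convolution of `Jp p ∘ u`, cut off in the closed ball of radius `ρ` about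
the origin, with the Riesz kernel. -/
def farIntegrand (p q ρ : ℝ) (u : E → ℝ) (x y : E) : ℝ :=
  {y | ρ < ‖y‖}.indicator (fun y => Jp p (u y)) y * rieszKernel q (x - y)

lemma VanishesToInfiniteOrder.exists_abs_Jp_apply_sub_add_le (hu : VanishesToInfiniteOrder u)
    (hp : 1 < p) (M R : ℝ) :
    ∃ K ≥ 0, ∀ᶠ ε in 𝓝[>] 0, ∀ x, ‖x‖ ≤ ε * R → ∀ t,
      |Jp p (u x - t) + Jp p t| ≤ K * ε ^ M * (1 + |t| ^ (p - 1)) := by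
  obtain ⟨K, hK, h_Jp⟩ := exists_abs_Jp_sub_add_le hp
  set m := min 1 (p - 1)
  have hm : 0 < m := lt_min one_pos (by linarith)
  refine ⟨K, hK, ?_⟩
  filter_upwards [hu.eventually_abs_le_rpow (M / m) R, hu.eventually_abs_le_rpow 0 R,
    self_mem_nhdsWithin] with ε h_flat h_one (hε : 0 < ε) x hx t
  have h_small : |u x| ^ m ≤ ε ^ M := calc
    |u x| ^ m ≤ (ε ^ (M / m)) ^ m := by gcongr; exact h_flat x hx
    _ = ε ^ M := by rw [← Real.rpow_mul hε.le, div_mul_cancel₀ _ hm.ne']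
  refine (h_Jp _ t ((h_one x hx).trans_eq (Real.rpow_zero ε))).trans ?_
  gcongr

lemma rieszKernel_sub_le_div_one_add_rpow (hq : 0 ≤ q) {ε : ℝ} (hε : 0 < ε) (hε1 : ε ≤ 1)
    {x y : E} (hy : ε ≤ ‖y‖) (hxy : 2 * ‖x‖ ≤ ‖y‖) :
    rieszKernel q (x - y) ≤ 4 ^ q * ε ^ (-q) / (1 + ‖y‖) ^ q := calc
  rieszKernel q (x - y) ≤ 2 ^ q * ‖y‖ ^ (-q) :=
    rieszKernel_sub_le hq (norm_pos_iff.mp (hε.trans_le hy)) hxy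
  _ ≤ 2 ^ q * ((2 / ε) ^ q / (1 + ‖y‖) ^ q) := by
    gcongr
    exact rpow_neg_le_div_one_add_rpow hq hε hε1 hy
  _ = 4 ^ q * ε ^ (-q) / (1 + ‖y‖) ^ q := by
    rw [← mul_div_assoc, ← Real.mul_rpow zero_le_two (by positivity), Real.rpow_neg hε.le,
      ← div_eq_mul_inv, ← Real.div_rpow (by norm_num) hε.le]
    ring_nf

lemma VanishesToInfiniteOrder.exists_abs_Jp_sub_add_mul_rieszKernel_le
    (hu : VanishesToInfiniteOrder u) (hp : 1 < p) (hq : 0 ≤ q) (R : ℝ) (N : ℕ) :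
    ∃ C ≥ 0, ∀ᶠ ε in 𝓝[>] 0, ∀ x, ‖x‖ ≤ ε * R → ∀ y, ε * (2 * R + 1) < ‖y‖ →
      |Jp p (u x - u y) + Jp p (u y)| * rieszKernel q (x - y) ≤
        C * ε ^ N * tailWeight (p - 1) q u y := by
  obtain ⟨K, hK, h_Jp⟩ := hu.exists_abs_Jp_apply_sub_add_le hp (N + q) R
  refine ⟨K * 4 ^ q, by positivity, ?_⟩
  filter_upwards [h_Jp, Ioc_mem_nhdsGT one_pos] with ε h_Jp ⟨hε, hε1⟩ x hx y hy
  have hRε : 0 ≤ ε * R := (norm_nonneg x).trans hx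
  calc |Jp p (u x - u y) + Jp p (u y)| * rieszKernel q (x - y)
      ≤ K * ε ^ (N + q) * (1 + |u y| ^ (p - 1)) * (4 ^ q * ε ^ (-q) / (1 + ‖y‖) ^ q) :=
        mul_le_mul (h_Jp x hx _) (rieszKernel_sub_le_div_one_add_rpow hq hε hε1 (by linarith)
          (by linarith)) (rieszKernel_nonneg _ _) (by positivity)
    _ = K * 4 ^ q * (ε ^ (N + q) * ε ^ (-q)) * tailWeight (p - 1) q u y := by
        rw [tailWeight]
        ring
    _ = K * 4 ^ q * ε ^ N * tailWeight (p - 1) q u y := by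
        rw [← Real.rpow_add hε, add_neg_cancel_right, Real.rpow_natCast]

lemma rpow_le_rpow_mul_rpow_of_le_of_le {D A B r t : ℝ} (hD : 0 ≤ D) (hA : D ≤ A) (hB : D ≤ B)
    (hr : 0 ≤ r) (ht : t ∈ Icc 0 1) : D ^ r ≤ A ^ (t * r) * B ^ ((1 - t) * r) := by
  have h_exp : 0 ≤ t * r := mul_nonneg ht.1 hr
  have h_exp' : 0 ≤ (1 - t) * r := mul_nonneg (sub_nonneg.mpr ht.2) hr
  have hA₀ : 0 ≤ A := hD.trans hA
  calc D ^ r = D ^ (t * r) * D ^ ((1 - t) * r) := by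
        rw [← Real.rpow_add_of_nonneg hD h_exp h_exp']
        ring_nf
    _ ≤ A ^ (t * r) * B ^ ((1 - t) * r) := by gcongr

lemma exists_interpolation_exponent {n β : ℝ} (hp : 1 < p) (hq : n < q)
    (hβ : (q - n) / (p - 1) < β) :
    0 < β ∧ ∃ t ∈ Ioo 0 1, q - β * (t * (p - 1)) < n := by
  have hp' : 0 < p - 1 := by linarith
  have hβ_pos : 0 < β := (div_pos (by linarith) hp').trans hβ
  rw [div_lt_iff₀ hp'] at hβ
  obtain ⟨t, ht, ht1⟩ := exists_between ((div_lt_one (mul_pos hβ_pos hp')).mpr hβ)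
  refine ⟨hβ_pos, t, ⟨(div_pos (by linarith) (by positivity)).trans ht, ht1⟩, ?_⟩
  rw [div_lt_iff₀ (by positivity)] at ht
  linarith

/- Interpolating between the two bounds on the oscillation, the Hölder bound weakens the diagonal
singularity to an integrable one while the small bound `B` supplies any power of the step. -/
lemma abs_fracIntegrand_le_of_holder (hp : 1 < p) {H B β t : ℝ} (ht : t ∈ Icc 0 1) {x y : E}
    (hxy : ‖x - y‖ < 1) (hH : 0 ≤ H) (h_holder : |u x - u y| ≤ H * ‖x - y‖ ^ β)
    (h_osc : |u x - u y| ≤ B) :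
    |fracIntegrand p q u x y| ≤ H ^ (t * (p - 1)) * B ^ ((1 - t) * (p - 1)) *
      singularWeight (q - β * (t * (p - 1))) (x - y) := by
  have hB : 0 ≤ B := (abs_nonneg _).trans h_osc
  rcases eq_or_ne x y with rfl | hne
  · rw [fracIntegrand, sub_self, Jp_zero, zero_mul, abs_zero]
    exact mul_nonneg (by positivity) (singularWeight_nonneg _ _)
  have h_pos : 0 < ‖x - y‖ := norm_pos_iff.mpr (sub_ne_zero.mpr hne)
  rw [fracIntegrand, abs_mul, abs_Jp hp.ne', abs_of_nonneg (rieszKernel_nonneg _ _)]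
  calc |u x - u y| ^ (p - 1) * rieszKernel q (x - y)
      ≤ (H * ‖x - y‖ ^ β) ^ (t * (p - 1)) * B ^ ((1 - t) * (p - 1)) * ‖x - y‖ ^ (-q) :=
        mul_le_mul_of_nonneg_right (rpow_le_rpow_mul_rpow_of_le_of_le (abs_nonneg _) h_holder
          h_osc (sub_nonneg.mpr hp.le) ht) (rieszKernel_nonneg _ _)
    _ = H ^ (t * (p - 1)) * B ^ ((1 - t) * (p - 1)) *
          (‖x - y‖ ^ (β * (t * (p - 1))) * ‖x - y‖ ^ (-q)) := by
        rw [Real.mul_rpow hH (by positivity), ← Real.rpow_mul h_pos.le]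
        ring
    _ = H ^ (t * (p - 1)) * B ^ ((1 - t) * (p - 1)) *
          singularWeight (q - β * (t * (p - 1))) (x - y) := by
        rw [singularWeight, indicator_of_mem (mem_ball_zero_iff.mpr hxy), ← Real.rpow_add h_pos]
        ring_nf

lemma VanishesToInfiniteOrder.exists_abs_fracIntegrand_le (hu : VanishesToInfiniteOrder u)
    (hp : 1 < p) {n β : ℝ} (hq : n < q) (hβ : (q - n) / (p - 1) < β) {H : ℝ≥0} {V : Set E}
    (hV : V ∈ 𝓝 0) (hH : HolderOnWith H β.toNNReal u V) (R : ℝ) (N : ℕ) :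
    ∃ a < n, ∃ C, ∀ᶠ ε in 𝓝[>] 0, ∀ x y, ‖x‖ ≤ ε * R → ‖y‖ ≤ ε * R →
      |fracIntegrand p q u x y| ≤ C * ε ^ N * singularWeight a (x - y) := by
  obtain ⟨hβ_pos, t, ⟨ht0, ht1⟩, ha⟩ := exists_interpolation_exponent hp hq hβ
  set e := (1 - t) * (p - 1)
  have he : 0 < e := mul_pos (by linarith) (by linarith)
  refine ⟨q - β * (t * (p - 1)), ha, H ^ (t * (p - 1)) * 2 ^ e, ?_⟩
  filter_upwards [eventually_forall_norm_le_mul hV R, hu.eventually_abs_le_rpow (N / e) R,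
    (tendsto_mul_const_nhdsGT_zero (2 * R)).eventually (gt_mem_nhds one_pos),
    self_mem_nhdsWithin] with ε h_mem h_flat h_small (hε : 0 < ε) x y hx hy
  have h_dist : ‖x - y‖ < 1 := by linarith [norm_sub_le x y]
  have h_holder : |u x - u y| ≤ H * ‖x - y‖ ^ β := by
    simpa only [Real.dist_eq, dist_eq_norm, Real.norm_eq_abs, Real.coe_toNNReal β hβ_pos.le] using
      hH.dist_le (h_mem x hx) (h_mem y hy)
  have h_osc : |u x - u y| ≤ 2 * ε ^ (N / e) := by
    linarith [abs_sub (u x) (u y), h_flat x hx, h_flat y hy]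
  have h_gain : (2 * ε ^ (N / e)) ^ e = 2 ^ e * ε ^ N := by
    rw [Real.mul_rpow zero_le_two (by positivity), ← Real.rpow_mul hε.le,
      div_mul_cancel₀ _ he.ne', Real.rpow_natCast]
  calc |fracIntegrand p q u x y|
      ≤ H ^ (t * (p - 1)) * (2 * ε ^ (N / e)) ^ e *
          singularWeight (q - β * (t * (p - 1))) (x - y) :=
        abs_fracIntegrand_le_of_holder hp ⟨ht0.le, ht1.le⟩ h_dist H.coe_nonneg h_holder h_osc
    _ = H ^ (t * (p - 1)) * 2 ^ e * ε ^ N * singularWeight (q - β * (t * (p - 1))) (x - y) := by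
        rw [h_gain]
        ring

lemma VanishesToInfiniteOrder.exists_abs_fracIntegrand_add_farIntegrand_le
    (hu : VanishesToInfiniteOrder u) (hp : 1 < p) {n β : ℝ} (hn : 0 ≤ n) (hq : n < q)
    (hβ : (q - n) / (p - 1) < β) {H : ℝ≥0} {V : Set E} (hV : V ∈ 𝓝 0)
    (hH : HolderOnWith H β.toNNReal u V) {R : ℝ} (hR : 0 ≤ R) (N : ℕ) :
    ∃ a < n, ∃ C ≥ 0, ∀ᶠ ε in 𝓝[>] 0, ∀ x, ‖x‖ ≤ ε * R → ∀ y,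
      |fracIntegrand p q u x y + farIntegrand p q (ε * (2 * R + 1)) u x y| ≤
        C * ε ^ N * (tailWeight (p - 1) q u y + singularWeight a (x - y)) := by
  obtain ⟨C₁, hC₁, h_outer⟩ := hu.exists_abs_Jp_sub_add_mul_rieszKernel_le hp (hn.trans hq.le) R N
  obtain ⟨a, ha, C₂, h_inner⟩ := hu.exists_abs_fracIntegrand_le hp hq hβ hV hH (2 * R + 1) N
  refine ⟨a, ha, max C₁ C₂, le_max_of_le_left hC₁, ?_⟩
  filter_upwards [h_outer, h_inner, self_mem_nhdsWithin] with ε h_outer h_inner (hε : 0 < ε) x hx y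
  have h_tail := tailWeight_nonneg (p - 1) q u y
  have h_sing := singularWeight_nonneg a (x - y)
  rcases lt_or_ge (ε * (2 * R + 1)) ‖y‖ with hy | hy
  · rw [fracIntegrand, farIntegrand, indicator_of_mem (by exact hy), ← add_mul, abs_mul,
      abs_of_nonneg (rieszKernel_nonneg _ _)]
    refine (h_outer x hx y hy).trans ?_
    gcongr
    exacts [le_max_left _ _, le_add_of_nonneg_right h_sing]
  · have hx' : ‖x‖ ≤ ε * (2 * R + 1) := hx.trans (by gcongr; linarith)
    rw [farIntegrand, indicator_of_notMem (by exact hy.not_gt), zero_mul, add_zero]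
    refine (h_inner x y hx' hy).trans ?_
    gcongr
    exacts [le_max_right _ _, le_add_of_nonneg_left h_tail]

end ErrorEstimate

section PrincipalValue

/-- `L` is the principal value of the integral over `y` of `fracIntegrand p q u x y`, written as
in `fracPLapAt`. -/
def HasPrincipalValue {E : Type*} [NormedAddCommGroup E] [MeasurableSpace E] (μ : Measure E)
    (p q : ℝ) (u : E → ℝ) (x : E) (L : ℝ) : Prop :=
  Tendsto (fun δ : ℝ => ∫ y in {y : E | δ < ‖x - y‖}, Jp p (u x - u y) / ‖x - y‖ ^ q ∂μ)
    (𝓝[>] 0) (𝓝 L)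

variable {E : Type*} [NormedAddCommGroup E] [MeasurableSpace E] [BorelSpace E] {μ : Measure E}
  {u : E → ℝ} {p q : ℝ}

lemma tendsto_setIntegral_lt_norm_sub [NullSingletonClass μ] {F : E → ℝ} (hF : Integrable F μ)
    (x : E) :
    Tendsto (fun δ : ℝ => ∫ y in {y | δ < ‖x - y‖}, F y ∂μ) (𝓝[>] 0) (𝓝 (∫ y, F y ∂μ)) := by
  have h_cover : AECover μ (𝓝[>] (0 : ℝ)) fun δ => {y | δ < ‖x - y‖} :=
    { ae_eventually_mem := by
        filter_upwards [Measure.ae_ne μ x] with y hy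
        exact nhdsWithin_le_nhds (gt_mem_nhds (norm_pos_iff.mpr (sub_ne_zero.mpr hy.symm)))
      measurableSet := fun δ => measurableSet_lt measurable_const (by fun_prop) }
  exact h_cover.integral_tendsto_of_countably_generated hF

lemma HasPrincipalValue.eq_integral [NullSingletonClass μ] {x : E} {L : ℝ}
    (hL : HasPrincipalValue μ p q u x L) (h_int : Integrable (fracIntegrand p q u x) μ) :
    L = ∫ y, fracIntegrand p q u x y ∂μ := by
  refine tendsto_nhds_unique hL ((tendsto_setIntegral_lt_norm_sub h_int x).congr fun δ => ?_)
  refine integral_congr_ae (.of_forall fun y => ?_)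
  simp only [fracIntegrand, rieszKernel, Real.rpow_neg (norm_nonneg _), div_eq_mul_inv]

lemma measurable_fracIntegrand (hu : Measurable u) (x : E) :
    Measurable (fracIntegrand p q u x) :=
  ((measurable_Jp p).comp (measurable_const.sub hu)).mul
    ((measurable_rieszKernel q).comp (continuous_const.sub continuous_id).measurable)

lemma measurable_farIntegrand (hu : Measurable u) (ρ : ℝ) (x : E) :
    Measurable (farIntegrand p q ρ u x) :=
  (((measurable_Jp p).comp hu).indicator (measurableSet_lt measurable_const measurable_norm)).mul
    ((measurable_rieszKernel q).comp (continuous_const.sub continuous_id).measurable)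

lemma VanishesToInfiniteOrder.integrable_farIntegrand [ProperSpace E]
    [IsFiniteMeasureOnCompacts μ] (hvan : VanishesToInfiniteOrder u)
    (hu : Measurable u) (hp : 1 < p) (hq : 0 ≤ q)
    (htail : Integrable (fun x => |u x| ^ (p - 1) / (1 + ‖x‖) ^ q) μ) {ρ : ℝ} {x : E}
    (hx : 2 * ‖x‖ ≤ ρ) : Integrable (farIntegrand p q ρ u x) μ := by
  refine ((hvan.integrable_rpow_mul_norm_rpow_neg hu (sub_pos.mpr hp) hq htail
    le_rfl).const_mul (2 ^ q)).mono' (measurable_farIntegrand hu ρ x).aestronglyMeasurable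
    (.of_forall fun y => ?_)
  rw [farIntegrand, norm_mul, Real.norm_of_nonneg (rieszKernel_nonneg _ _)]
  rcases lt_or_ge ρ ‖y‖ with hy | hy
  · rw [indicator_of_mem (by exact hy), Real.norm_eq_abs, abs_Jp hp.ne', mul_left_comm]
    gcongr
    exact rieszKernel_sub_le hq (norm_pos_iff.mp (by linarith [norm_nonneg x])) (hx.trans hy.le)
  · rw [indicator_of_notMem (by exact hy.not_gt), norm_zero, zero_mul]
    positivity

variable [NormedSpace ℝ E] [FiniteDimensional ℝ E] [μ.IsAddHaarMeasure]

lemma HasPrincipalValue.abs_add_integral_farIntegrand_le [Nontrivial E]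
    (hu : Measurable u) (hq : Module.finrank ℝ E < q)
    (htail : Integrable (fun x => |u x| ^ (p - 1) / (1 + ‖x‖) ^ q) μ) {a ρ B L : ℝ}
    (ha : a < Module.finrank ℝ E) {x : E} (hL : HasPrincipalValue μ p q u x L)
    (h_far : Integrable (farIntegrand p q ρ u x) μ)
    (h_le : ∀ y, |fracIntegrand p q u x y + farIntegrand p q ρ u x y| ≤
      B * (tailWeight (p - 1) q u y + singularWeight a (x - y))) :
    |L + ∫ y, farIntegrand p q ρ u x y ∂μ| ≤
      B * (∫ y, tailWeight (p - 1) q u y ∂μ + ∫ y, singularWeight a y ∂μ) := by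
  have h_tail := integrable_tailWeight hq htail
  have h_sing := (integrable_singularWeight (μ := μ) ha).comp_sub_left x
  have h_dom : Integrable (fun y => B * (tailWeight (p - 1) q u y + singularWeight a (x - y))) μ :=
    (h_tail.add h_sing).const_mul B
  have h_sum : Integrable (fun y => fracIntegrand p q u x y + farIntegrand p q ρ u x y) μ :=
    h_dom.mono' ((measurable_fracIntegrand hu x).add
      (measurable_farIntegrand hu ρ x)).aestronglyMeasurable (.of_forall h_le)
  have h_frac : Integrable (fracIntegrand p q u x) μ :=
    (h_sum.sub h_far).congr (.of_forall fun y => by simp)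
  calc |L + ∫ y, farIntegrand p q ρ u x y ∂μ|
      = |∫ y, fracIntegrand p q u x y + farIntegrand p q ρ u x y ∂μ| := by
        rw [hL.eq_integral h_frac, integral_add h_frac h_far]
    _ ≤ ∫ y, B * (tailWeight (p - 1) q u y + singularWeight a (x - y)) ∂μ :=
        (Real.norm_eq_abs _).symm.trans_le (norm_integral_le_of_norm_le h_dom (.of_forall h_le))
    _ = B * (∫ y, tailWeight (p - 1) q u y ∂μ + ∫ y, singularWeight a y ∂μ) := by
        rw [integral_const_mul, integral_add h_tail h_sing, integral_sub_left_eq_self]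

lemma VanishesToInfiniteOrder.exists_abs_add_integral_farIntegrand_le [Nontrivial E]
    (hvan : VanishesToInfiniteOrder u) (hu : Measurable u) (hp : 1 < p)
    (hq : Module.finrank ℝ E < q)
    (htail : Integrable (fun x => |u x| ^ (p - 1) / (1 + ‖x‖) ^ q) μ) {β : ℝ}
    (hβ : (q - Module.finrank ℝ E) / (p - 1) < β) {H : ℝ≥0} {V : Set E} (hV : V ∈ 𝓝 0)
    (hH : HolderOnWith H β.toNNReal u V) {R : ℝ} (hR : 0 ≤ R) (N : ℕ) :
    ∃ C, ∀ᶠ ε in 𝓝[>] 0, ∀ x, ‖x‖ ≤ ε * R → ∀ L, HasPrincipalValue μ p q u x L →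
      |L + ∫ y, farIntegrand p q (ε * (2 * R + 1)) u x y ∂μ| ≤ C * ε ^ N := by
  have hn : (0 : ℝ) ≤ Module.finrank ℝ E := Nat.cast_nonneg _
  obtain ⟨a, ha, C, -, h_le⟩ :=
    hvan.exists_abs_fracIntegrand_add_farIntegrand_le hp hn hq hβ hV hH hR N
  refine ⟨C * (∫ y, tailWeight (p - 1) q u y ∂μ + ∫ y, singularWeight a y ∂μ), ?_⟩
  filter_upwards [h_le, self_mem_nhdsWithin] with ε h_le (hε : 0 < ε) x hx L hL
  have h_far : Integrable (farIntegrand p q (ε * (2 * R + 1)) u x) μ :=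
    hvan.integrable_farIntegrand hu hp (hn.trans hq.le) htail (by linarith)
  exact (hL.abs_add_integral_farIntegrand_le hu hq htail ha h_far (h_le x hx)).trans_eq
    (mul_right_comm _ _ _)

end PrincipalValue

section Limit

variable {E : Type*} [NormedAddCommGroup E] [InnerProductSpace ℝ E] {u : E → ℝ} {p q : ℝ}

lemma iterDiffQuot_farIntegrand (ε ρ : ℝ) (l : List E) (y : E) :
    iterDiffQuot ε l (fun x => farIntegrand p q ρ u x y) 0 =
      {y | ρ < ‖y‖}.indicator (fun y => Jp p (u y)) y * iterDiffQuot ε l (rieszKernel q) (-y) := by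
  simp only [farIntegrand]
  rw [iterDiffQuot_const_mul, iterDiffQuot_comp_sub_right, zero_sub]

lemma VanishesToInfiniteOrder.tendsto_iterDiffQuot_farIntegrand
    (hvan : VanishesToInfiniteOrder u) (l : List E) (y : E) :
    Tendsto (fun ε => iterDiffQuot ε l
        (fun x => farIntegrand p q (ε * (2 * reach l + 1)) u x y) 0) (𝓝[>] 0)
      (𝓝 (Jp p (u y) * iterDirDeriv l (rieszKernel q) (-y))) := by
  simp only [iterDiffQuot_farIntegrand]
  rcases eq_or_ne y 0 with rfl | hy
  · simp [hvan.apply_zero, Jp_zero, indicator]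
  · refine ((tendsto_iterDiffQuot isOpen_compl_singleton (contDiffOn_rieszKernel q) l
      (neg_ne_zero.mpr hy)).const_mul _).congr' ?_
    filter_upwards [(tendsto_mul_const_nhdsGT_zero (2 * reach l + 1)).eventually
      (gt_mem_nhds (norm_pos_iff.mpr hy))] with ε hε
    rw [indicator_of_mem (by exact hε)]

variable [FiniteDimensional ℝ E] [MeasurableSpace E] [BorelSpace E] {μ : Measure E}

lemma VanishesToInfiniteOrder.integrable_Jp_mul_iterDirDeriv_rieszKernel
    [IsFiniteMeasureOnCompacts μ] (hvan : VanishesToInfiniteOrder u) (hu : Measurable u)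
    (hp : 1 < p) (hq : 0 ≤ q)
    (htail : Integrable (fun x => |u x| ^ (p - 1) / (1 + ‖x‖) ^ q) μ) (l : List E) :
    Integrable (fun y => Jp p (u y) * iterDirDeriv l (rieszKernel q) y) μ := by
  obtain ⟨C, -, h_le⟩ := exists_abs_iterDirDeriv_rieszKernel_le q l
  have h_dom := (hvan.integrable_rpow_mul_norm_rpow_neg hu (sub_pos.mpr hp) hq htail
    (le_add_of_nonneg_right l.length.cast_nonneg)).const_mul C
  refine h_dom.mono' (((measurable_Jp p).comp hu).mul
    (measurable_iterDirDeriv (measurable_rieszKernel q) l)).aestronglyMeasurable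
    (.of_forall fun y => ?_)
  rw [Real.norm_eq_abs, abs_mul, abs_Jp hp.ne']
  rcases eq_or_ne y 0 with rfl | hy
  · simp [hvan.apply_zero, Real.zero_rpow (sub_pos.mpr hp).ne']
  · rw [mul_left_comm]
    gcongr
    exact h_le y hy

lemma VanishesToInfiniteOrder.iterDiffQuot_integral_farIntegrand
    [IsFiniteMeasureOnCompacts μ] (hvan : VanishesToInfiniteOrder u) (hu : Measurable u)
    (hp : 1 < p) (hq : 0 ≤ q)
    (htail : Integrable (fun x => |u x| ^ (p - 1) / (1 + ‖x‖) ^ q) μ) (l : List E) {ε : ℝ}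
    (hε : 0 < ε) :
    Integrable (fun y => iterDiffQuot ε l
        (fun x => farIntegrand p q (ε * (2 * reach l + 1)) u x y) 0) μ ∧
      iterDiffQuot ε l (fun x => ∫ y, farIntegrand p q (ε * (2 * reach l + 1)) u x y ∂μ) 0 =
        ∫ y, iterDiffQuot ε l (fun x => farIntegrand p q (ε * (2 * reach l + 1)) u x y) 0 ∂μ :=
  iterDiffQuot_integral hε.le l fun x hx => hvan.integrable_farIntegrand hu hp hq htail <| by
    linarith [mem_closedBall_zero_iff.mp hx]

lemma VanishesToInfiniteOrder.tendsto_iterDiffQuot_integral_farIntegrand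
    [IsFiniteMeasureOnCompacts μ] (hvan : VanishesToInfiniteOrder u) (hu : Measurable u)
    (hp : 1 < p) (hq : 0 ≤ q)
    (htail : Integrable (fun x => |u x| ^ (p - 1) / (1 + ‖x‖) ^ q) μ) (l : List E) :
    Tendsto (fun ε => iterDiffQuot ε l
        (fun x => ∫ y, farIntegrand p q (ε * (2 * reach l + 1)) u x y ∂μ) 0) (𝓝[>] 0)
      (𝓝 (∫ y, Jp p (u y) * iterDirDeriv l (rieszKernel q) (-y) ∂μ)) := by
  obtain ⟨C, hC, h_le⟩ := exists_abs_iterDiffQuot_rieszKernel_le hq l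
  have h_dom := (hvan.integrable_rpow_mul_norm_rpow_neg hu (sub_pos.mpr hp) hq htail
    (le_add_of_nonneg_right l.length.cast_nonneg)).const_mul C
  have h_exchange {ε : ℝ} := hvan.iterDiffQuot_integral_farIntegrand (ε := ε) hu hp hq htail l
  refine (tendsto_integral_filter_of_dominated_convergence _ ?_ ?_ h_dom (.of_forall
    (hvan.tendsto_iterDiffQuot_farIntegrand l))).congr' ?_
  · filter_upwards [self_mem_nhdsWithin] with ε hε using (h_exchange hε).1.aestronglyMeasurable
  · filter_upwards [self_mem_nhdsWithin] with ε hε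
    refine .of_forall fun y => ?_
    rw [iterDiffQuot_farIntegrand, norm_mul, Real.norm_eq_abs, Real.norm_eq_abs]
    rcases lt_or_ge (ε * (2 * reach l + 1)) ‖y‖ with hy | hy
    · rw [indicator_of_mem (by exact hy), abs_Jp hp.ne', mul_left_comm]
      gcongr
      exact h_le ε hε y hy
    · rw [indicator_of_notMem (by exact hy.not_gt), abs_zero, zero_mul]
      positivity
  · filter_upwards [self_mem_nhdsWithin] with ε hε using (h_exchange hε).2.symm

theorem finite_difference_quotients_converge_general [Nontrivial E] [μ.IsAddHaarMeasure]
    (hp : 1 < p) (hq : Module.finrank ℝ E < q) (hu : Measurable u)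
    (htail : Integrable (fun x => |u x| ^ (p - 1) / (1 + ‖x‖) ^ q) μ) {β : ℝ}
    (hβ : (q - Module.finrank ℝ E) / (p - 1) < β) {H : ℝ≥0} {V : Set E} (hV : V ∈ 𝓝 0)
    (hH : HolderOnWith H β.toNNReal u V) (hvan : VanishesToInfiniteOrder u) {U : E → ℝ}
    (hU : ∀ᶠ x in 𝓝 0, HasPrincipalValue μ p q u x (U x)) (l : List E) :
    Integrable (fun y => Jp p (u y) * iterDirDeriv l (rieszKernel q) y) μ ∧
      Tendsto (fun ε => iterDiffQuot ε l U 0) (𝓝[>] 0)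
        (𝓝 (-∫ y, Jp p (u y) * (-1) ^ l.length * iterDirDeriv l (rieszKernel q) y ∂μ)) := by
  have hq' : 0 ≤ q := (Nat.cast_nonneg _).trans hq.le
  refine ⟨hvan.integrable_Jp_mul_iterDirDeriv_rieszKernel hu hp hq' htail l, ?_⟩
  let far (ε : ℝ) (x : E) : ℝ := ∫ y, farIntegrand p q (ε * (2 * reach l + 1)) u x y ∂μ
  obtain ⟨C, h_le⟩ := hvan.exists_abs_add_integral_farIntegrand_le hu hp hq htail hβ hV hH
    (reach_nonneg l) (l.length + 1)
  have h_error : Tendsto (fun ε => iterDiffQuot ε l (U + far ε) 0) (𝓝[>] 0) (𝓝 0) := by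
    refine tendsto_iterDiffQuot_zero (C := C) ?_
    filter_upwards [h_le, eventually_forall_norm_le_mul hU (reach l)] with ε h_le hU x hx
    rw [mem_closedBall_zero_iff] at hx
    exact h_le x hx _ (hU x hx)
  have h_far := hvan.tendsto_iterDiffQuot_integral_farIntegrand (μ := μ) hu hp hq' htail l
  convert (h_error.sub h_far).congr fun ε => ?_ using 2
  · simp only [zero_sub, iterDirDeriv_rieszKernel_neg, mul_assoc]
  · rw [iterDiffQuot_add, Pi.add_apply, add_sub_cancel_right]

end Limit

section MultiIndex

lemma foldr_iterate_eq_foldr_flatMap_replicate {ι A X : Type*} (F : A → X → X) (v : ι → A)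
    (m : ι → ℕ) (l : List ι) (g : X) :
    l.foldr (fun i acc => (F (v i))^[m i] acc) g =
      (l.flatMap fun i => List.replicate (m i) (v i)).foldr F g := by
  have h_replicate (a : A) (n : ℕ) (g : X) : (List.replicate n a).foldr F g = (F a)^[n] g := by
    induction n with
    | zero => rfl
    | succ n ih => rw [List.replicate_succ, List.foldr_cons, ih, Function.iterate_succ_apply']
  simp only [List.foldr_flatMap, h_replicate]

/-- The list of directions in which the multiindex `α` repeats the basis vector `e_i` exactly
`α i` times. -/
def multiIndexDirections {d : ℕ} (α : Fin d → ℕ) : List (Ed d) :=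
  (List.finRange d).flatMap fun i => List.replicate (α i) (EuclideanSpace.single i 1)

lemma length_multiIndexDirections {d : ℕ} (α : Fin d → ℕ) :
    (multiIndexDirections α).length = ∑ i, α i := by
  simp [multiIndexDirections, List.length_flatMap, Fin.sum_univ_def]

lemma fdiffMulti_eq_iterDiffQuot {d : ℕ} (ε : ℝ) (α : Fin d → ℕ) (g : Ed d → ℝ) :
    fdiffMulti d ε α g = iterDiffQuot ε (multiIndexDirections α) g :=
  foldr_iterate_eq_foldr_flatMap_replicate (diffQuot ε) _ α _ g

lemma pderivMulti_eq_iterDirDeriv {d : ℕ} (α : Fin d → ℕ) (g : Ed d → ℝ) :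
    pderivMulti d α g = iterDirDeriv (multiIndexDirections α) g :=
  foldr_iterate_eq_foldr_flatMap_replicate dirDeriv _ α _ g

end MultiIndex

/-- Step 1: convergence of the finite difference quotients of
`U = (-Δ_p)^s u` at the origin. If `u ∈ L^{p-1}_{sp}(ℝ^d)` is locally `β`-Hölder in `Ω`
with `sp/(p-1) < β ≤ 1`, vanishes to infinite order at `0`, and the principal value
`U(x) = (-Δ_p)^s u(x)` exists for every `x ∈ Ω`, then for every multiindex `α`, the
function `y ↦ J_p(u(y)) ∂^α_y |y|^{-d-sp}` is integrable and
`D_ε^α U(0) → -∫ J_p(u(y)) (-1)^{|α|} ∂^α_y |y|^{-d-sp} dy` as `ε → 0⁺`. -/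
theorem finite_difference_quotients_converge
    (d : ℕ) (hd : 1 ≤ d) (s p : ℝ) (hs : s ∈ Ioo (0 : ℝ) 1) (hp : 1 < p)
    (Ω : Set (Ed d)) (hΩ : IsOpen Ω) (h0Ω : (0 : Ed d) ∈ Ω)
    (u : Ed d → ℝ) (hu : memTail d s p u)
    (β : ℝ) (hβ : s * p / (p - 1) < β) (hβ_le : β ≤ 1)
    (hreg : ∀ x ∈ Ω, ∃ r > 0, ball x r ⊆ Ω ∧
      ∃ C : ℝ≥0, HolderOnWith C β.toNNReal u (ball x r))
    (hvan : ∀ n : ℕ, u =O[nhds (0 : Ed d)] fun x => ‖x‖ ^ n)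
    (U : Ed d → ℝ) (hU : ∀ x ∈ Ω, fracPLapAt d s p u x (U x)) :
    ∀ α : Fin d → ℕ,
      Integrable (fun y : Ed d =>
        Jp p (u y) * pderivMulti d α (fun z : Ed d => ‖z‖ ^ (-((d : ℝ) + s * p))) y) ∧
      Tendsto (fun ε : ℝ => fdiffMulti d ε α U 0) (nhdsWithin 0 (Ioi 0))
        (nhds (-∫ y : Ed d, Jp p (u y) * (-1 : ℝ) ^ (∑ i, α i) *
          pderivMulti d α (fun z : Ed d => ‖z‖ ^ (-((d : ℝ) + s * p))) y)) := by
  intro α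
  have : Nonempty (Fin d) := ⟨⟨0, hd⟩⟩
  have hq : (Module.finrank ℝ (Ed d) : ℝ) < d + s * p := by
    rw [finrank_euclideanSpace_fin]
    exact lt_add_of_pos_right _ (mul_pos hs.1 (by linarith))
  have hβ' : (d + s * p - Module.finrank ℝ (Ed d)) / (p - 1) < β := by
    rwa [finrank_euclideanSpace_fin, add_sub_cancel_left]
  obtain ⟨r, hr, -, H, hH⟩ := hreg 0 h0Ω
  have h_pv : ∀ᶠ x in 𝓝 0, HasPrincipalValue volume p (d + s * p) u x (U x) :=
    (hΩ.eventually_mem h0Ω).mono hU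
  simp only [fdiffMulti_eq_iterDiffQuot, pderivMulti_eq_iterDirDeriv,
    ← length_multiIndexDirections]
  exact finite_difference_quotients_converge_general hp hq hu.1 hu.2 hβ' (ball_mem_nhds 0 hr) hH
    hvan h_pv (multiIndexDirections α)
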